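/- arXiv:0905.1183 — 2 statements merged into one kernel-verified Lean document; each statement's English description precedes it below -/
import Mathlib

section
/- Let E be a variational subsolution in Ω. There exists c > 0 depending only on n and s such that for every x ∈ ∂E with B_r(x) ∩ E ⊆ Ω, one has |E ∩ B_r(x)| ≥ c r^n. -/
open MeasureTheory Metric Filter Set

/-- Interaction energy `L(A,B) = ∫∫ χ_A(x) χ_B(y) |x-y|^{-(n+s)} dx dy`, valued in `[0,∞]`. -/
noncomputable def interactionL (n : ℕ) (s : ℝ)
    (A B : Set (EuclideanSpace ℝ (Fin n))) : ENNReal :=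
  ∫⁻ x in A, ∫⁻ y in B, ENNReal.ofReal (1 / ‖x - y‖ ^ ((n : ℝ) + s))

/-- `E` is a variational subsolution in `Ω`. -/
def IsSubsolutionIn (n : ℕ) (s : ℝ) (Ω E : Set (EuclideanSpace ℝ (Fin n))) : Prop :=
  ∀ A : Set (EuclideanSpace ℝ (Fin n)), MeasurableSet A → A ⊆ E ∩ Ω →
    interactionL n s A Eᶜ ≤ interactionL n s A (E \ A)

lemma radial_aux (n : ℕ) (hn : 1 ≤ n) (s : ℝ) (hs : s ∈ Set.Ioo (0:ℝ) 1) (δ : ℝ) (hδ : 0 < δ) :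
    IntegrableOn (fun y : ℝ => y ^ (n - 1) • (1 / y ^ ((n : ℝ) + s) * min δ y)) (Ioi 0) ∧
    ∫ y in Ioi (0:ℝ), y ^ (n - 1) • (1 / y ^ ((n : ℝ) + s) * min δ y)
      = (1 / (1 - s) + 1 / s) * δ ^ (1 - s) := by
  obtain ⟨hs0, hs1⟩ := hs
  have hpw : ∀ y : ℝ, 0 < y → y ^ (n - 1) * (1 / y ^ ((n : ℝ) + s)) = y ^ (-1 - s) := by
    intro y hy
    rw [← Real.rpow_natCast, one_div, ← Real.rpow_neg hy.le, ← Real.rpow_add hy,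
      Nat.cast_sub hn]
    congr 1; push_cast; ring
  have e1 : EqOn (fun y : ℝ => y ^ (-s)) (fun y : ℝ => y ^ (n - 1) • (1 / y ^ ((n : ℝ) + s) * min δ y))
      (Ioc 0 δ) := by
    intro y hy
    simp only [smul_eq_mul]
    rw [← mul_assoc, hpw y hy.1, min_eq_right hy.2]
    nth_rewrite 3 [← Real.rpow_one y]
    rw [← Real.rpow_add hy.1]; congr 1; ring
  have e2 : EqOn (fun y : ℝ => δ * y ^ (-1 - s))
      (fun y : ℝ => y ^ (n - 1) • (1 / y ^ ((n : ℝ) + s) * min δ y)) (Ioi δ) := by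
    intro y hy
    have hy0 : 0 < y := hδ.trans hy
    simp only [smul_eq_mul]
    rw [← mul_assoc, hpw y hy0, min_eq_left (le_of_lt hy), mul_comm]
  have i1 : IntegrableOn (fun y : ℝ => y ^ (-s)) (Ioc 0 δ) :=
    (intervalIntegrable_iff_integrableOn_Ioc_of_le hδ.le).1
      (intervalIntegral.intervalIntegrable_rpow' (by linarith))
  have i2 : IntegrableOn (fun y : ℝ => δ * y ^ (-1 - s)) (Ioi δ) :=
    (integrableOn_Ioi_rpow_of_lt (by linarith) hδ).const_mul δ
  have j1 := i1.congr_fun e1 measurableSet_Ioc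
  have j2 := i2.congr_fun e2 measurableSet_Ioi
  have hU : Ioi (0:ℝ) = Ioc 0 δ ∪ Ioi δ := (Ioc_union_Ioi_eq_Ioi hδ.le).symm
  refine ⟨hU ▸ j1.union j2, ?_⟩
  rw [hU, setIntegral_union (Ioc_disjoint_Ioi le_rfl) measurableSet_Ioi j1 j2,
    ← setIntegral_congr_fun measurableSet_Ioc e1, ← setIntegral_congr_fun measurableSet_Ioi e2,
    ← intervalIntegral.integral_of_le hδ.le, integral_rpow (Or.inl (by linarith)),
    integral_const_mul, integral_Ioi_rpow_of_lt (by linarith) hδ]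
  have : δ * δ ^ (-1 - s + 1) = δ ^ (1 - s) := by
    nth_rewrite 1 [← Real.rpow_one δ]
    rw [← Real.rpow_add hδ]; congr 1; ring
  rw [Real.zero_rpow (by linarith), show -s + 1 = 1 - s by ring]
  have h3 : δ * (-δ ^ (-1 - s + 1) / (-1 - s + 1)) = δ ^ (1 - s) / s := by
    rw [← this]; rw [show -1 - s + 1 = -s by ring, neg_div_neg_eq]; ring
  rw [h3]; ring

lemma kernel_int (n : ℕ) (hn : 1 ≤ n) (s : ℝ) (hs : s ∈ Set.Ioo (0:ℝ) 1) (δ : ℝ) (hδ : 0 < δ)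
    (p : EuclideanSpace ℝ (Fin n)) :
    ∫⁻ y, ENNReal.ofReal (1 / ‖p - y‖ ^ ((n : ℝ) + s)) * ENNReal.ofReal (min δ ‖p - y‖)
      = ENNReal.ofReal (n * (volume.real (ball (0 : EuclideanSpace ℝ (Fin n)) 1) *
        ((1 / (1 - s) + 1 / s) * δ ^ (1 - s)))) := by
  have : Nonempty (Fin n) := ⟨⟨0, hn⟩⟩
  obtain ⟨h1, h2⟩ := radial_aux n hn s hs δ hδ
  have hd : Module.finrank ℝ (EuclideanSpace ℝ (Fin n)) = n := by simp
  have a1 := (integrable_fun_norm_addHaar (volume : Measure (EuclideanSpace ℝ (Fin n)))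
    (f := fun y : ℝ => 1 / y ^ ((n : ℝ) + s) * min δ y)).2 (by rw [hd]; exact h1)
  have a2 := integral_fun_norm_addHaar (volume : Measure (EuclideanSpace ℝ (Fin n)))
    (fun y : ℝ => 1 / y ^ ((n : ℝ) + s) * min δ y)
  rw [hd, h2] at a2
  rw [lintegral_sub_left_eq_self (fun z : EuclideanSpace ℝ (Fin n) =>
    ENNReal.ofReal (1 / ‖z‖ ^ ((n : ℝ) + s)) * ENNReal.ofReal (min δ ‖z‖)) p]
  rw [nsmul_eq_mul, smul_eq_mul] at a2
  rw [← a2, ofReal_integral_eq_lintegral_ofReal a1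
    (Eventually.of_forall fun z => by simp only [Pi.zero_apply]; positivity)]
  refine lintegral_congr fun z => ?_
  rw [ENNReal.ofReal_mul (by positivity)]

lemma kern_meas (n : ℕ) (s : ℝ) : Measurable (fun q : EuclideanSpace ℝ (Fin n) × EuclideanSpace ℝ (Fin n) =>
    ENNReal.ofReal (1 / ‖q.1 - q.2‖ ^ ((n : ℝ) + s))) := by
  fun_prop

/-- Averaged upper bound for the interactions with the complement of balls. -/
lemma upper_bound (n : ℕ) (hn : 1 ≤ n) (s : ℝ) (hs : s ∈ Set.Ioo (0:ℝ) 1)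
    (E : Set (EuclideanSpace ℝ (Fin n))) (hE : MeasurableSet E) (x : EuclideanSpace ℝ (Fin n))
    (τ t : ℝ) (hτ : τ < t) :
    ∫⁻ ρ in Ioo τ t, interactionL n s (E ∩ ball x ρ) (E \ (E ∩ ball x ρ)) ≤
      ENNReal.ofReal (n * (volume.real (ball (0 : EuclideanSpace ℝ (Fin n)) 1) *
        ((1 / (1 - s) + 1 / s) * (t - τ) ^ (1 - s)))) * volume (E ∩ ball x t) := by
  let S : Set (ℝ × EuclideanSpace ℝ (Fin n) × EuclideanSpace ℝ (Fin n)) := {q | ‖q.2.1 - x‖ < q.1 ∧ q.1 ≤ ‖q.2.2 - x‖}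
  have hS : MeasurableSet S :=
    (measurableSet_lt (f := fun q : ℝ × EuclideanSpace ℝ (Fin n) × EuclideanSpace ℝ (Fin n) => ‖q.2.1 - x‖) (g := fun q : ℝ × EuclideanSpace ℝ (Fin n) × EuclideanSpace ℝ (Fin n) => q.1)
      (by fun_prop) (by fun_prop)).inter
      (measurableSet_le (f := fun q : ℝ × EuclideanSpace ℝ (Fin n) × EuclideanSpace ℝ (Fin n) => q.1) (g := fun q : ℝ × EuclideanSpace ℝ (Fin n) × EuclideanSpace ℝ (Fin n) => ‖q.2.2 - x‖)
      (by fun_prop) (by fun_prop))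
  let g : ℝ × EuclideanSpace ℝ (Fin n) × EuclideanSpace ℝ (Fin n) → ENNReal := S.indicator (fun q => ENNReal.ofReal (1 / ‖q.2.1 - q.2.2‖ ^ ((n : ℝ) + s)))
  have hg : Measurable g := ((kern_meas n s).comp measurable_snd).indicator hS
  have step1 : ∀ ρ ∈ Ioo τ t, interactionL n s (E ∩ ball x ρ) (E \ (E ∩ ball x ρ)) ≤
      ∫⁻ p in E ∩ ball x t, ∫⁻ y, g (ρ, p, y) := by
    intro ρ hρ
    unfold interactionL
    have hm : MeasurableSet (E ∩ ball x ρ) := hE.inter measurableSet_ball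
    calc _ ≤ ∫⁻ p in E ∩ ball x ρ, ∫⁻ y, g (ρ, p, y) := by
            refine setLIntegral_mono' hm fun p hp => ?_
            rw [← lintegral_indicator (hE.diff hm)]
            refine lintegral_mono fun y => ?_
            by_cases hy : y ∈ E \ (E ∩ ball x ρ)
            · have : (ρ, p, y) ∈ S := by
                refine ⟨by simpa [dist_eq_norm] using hp.2, ?_⟩
                have : y ∉ ball x ρ := fun h => hy.2 ⟨hy.1, h⟩
                simpa [dist_eq_norm] using this
              simp only [g]
              rw [indicator_of_mem hy, indicator_of_mem this]
            · rw [indicator_of_notMem hy]; exact zero_le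
      _ ≤ _ := lintegral_mono_set (inter_subset_inter_right _ (ball_subset_ball hρ.2.le))
  calc _ ≤ ∫⁻ ρ in Ioo τ t, ∫⁻ p in E ∩ ball x t, ∫⁻ y, g (ρ, p, y) :=
        setLIntegral_mono' measurableSet_Ioo step1
    _ = ∫⁻ p in E ∩ ball x t, ∫⁻ ρ in Ioo τ t, ∫⁻ y, g (ρ, p, y) := by
        refine lintegral_lintegral_swap (Measurable.aemeasurable ?_)
        have : Measurable (fun q : (ℝ × EuclideanSpace ℝ (Fin n)) × EuclideanSpace ℝ (Fin n) => g (q.1.1, q.1.2, q.2)) := hg.comp (by fun_prop)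
        exact this.lintegral_prod_right'
    _ = ∫⁻ p in E ∩ ball x t, ∫⁻ y, ∫⁻ ρ in Ioo τ t, g (ρ, p, y) := by
        refine lintegral_congr fun p => ?_
        refine lintegral_lintegral_swap (Measurable.aemeasurable ?_)
        exact hg.comp (by fun_prop : Measurable fun q : ℝ × EuclideanSpace ℝ (Fin n) => (q.1, p, q.2))
    _ ≤ ∫⁻ p in E ∩ ball x t, ∫⁻ y, ENNReal.ofReal (1 / ‖p - y‖ ^ ((n : ℝ) + s)) *
          ENNReal.ofReal (min (t - τ) ‖p - y‖) := by
        refine lintegral_mono fun p => lintegral_mono fun y => ?_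
        have : ∀ ρ, g (ρ, p, y) = (Ioc ‖p - x‖ ‖y - x‖).indicator
            (fun _ => ENNReal.ofReal (1 / ‖p - y‖ ^ ((n : ℝ) + s))) ρ := by
          intro ρ; rfl
        simp_rw [this]
        rw [lintegral_indicator measurableSet_Ioc, setLIntegral_const]
        gcongr
        rw [Measure.restrict_apply measurableSet_Ioc, ENNReal.ofReal_min]
        refine le_min ?_ ?_
        · exact (measure_mono inter_subset_right).trans (by simp)
        · refine (measure_mono inter_subset_left).trans ?_
          rw [Real.volume_Ioc]
          refine ENNReal.ofReal_le_ofReal ?_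
          have := norm_sub_norm_le (y - x) (p - x)
          rwa [sub_sub_sub_cancel_right, norm_sub_rev y p] at this
    _ = _ := by
        simp_rw [kernel_int n hn s hs (t - τ) (sub_pos.2 hτ)]
        rw [setLIntegral_const]

lemma lower_bound (n : ℕ) (hn : 1 ≤ n) (s : ℝ) (hs : s ∈ Set.Ioo (0:ℝ) 1)
    (A : Set (EuclideanSpace ℝ (Fin n))) (hA : MeasurableSet A) (w : ℝ) (hw : 0 < w)
    (hAw : volume A ≤ ENNReal.ofReal (w ^ n) * volume (ball (0 : EuclideanSpace ℝ (Fin n)) 1)) :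
    ENNReal.ofReal (1 / (2 * w) ^ ((n : ℝ) + s)) * 
      (ENNReal.ofReal (w ^ n) * volume (ball (0 : EuclideanSpace ℝ (Fin n)) 1)) * volume A ≤ 
    interactionL n s A Aᶜ := by
  obtain ⟨hs0, hs1⟩ := hs
  have : Nonempty (Fin n) := ⟨⟨0, hn⟩⟩
  unfold interactionL
  rw [← setLIntegral_const]
  refine lintegral_mono fun p => ?_
  set ω := volume (ball (0 : EuclideanSpace ℝ (Fin n)) 1)
  have hωt : ω ≠ ⊤ := measure_ball_lt_top.ne
  have hb : volume (ball p (2 * w)) = ENNReal.ofReal ((2 * w) ^ n) * ω := by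
    rw [Measure.addHaar_ball _ _ (by positivity)]; simp [ω]
  have h2 : ENNReal.ofReal (w ^ n) * ω ≤ volume (ball p (2 * w) \ A) := by
    refine le_trans ?_ le_measure_sdiff
    rw [hb]
    refine le_trans ?_ (tsub_le_tsub_left hAw _)
    refine ENNReal.le_sub_of_add_le_right (ENNReal.mul_ne_top ENNReal.ofReal_ne_top hωt) ?_
    rw [← add_mul, ← ENNReal.ofReal_add (by positivity) (by positivity)]
    gcongr
    rw [mul_pow]
    have : (2:ℝ) ^ 1 ≤ 2 ^ n := pow_le_pow_right₀ (by norm_num) hn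
    nlinarith [pow_pos hw n]
  calc _ ≤ ENNReal.ofReal (1 / (2 * w) ^ ((n : ℝ) + s)) * volume (ball p (2 * w) \ A) := by gcongr
    _ = ∫⁻ y in ball p (2 * w) \ A, ENNReal.ofReal (1 / (2 * w) ^ ((n : ℝ) + s)) := by
        rw [setLIntegral_const]
    _ ≤ ∫⁻ y in ball p (2 * w) \ A, ENNReal.ofReal (1 / ‖p - y‖ ^ ((n : ℝ) + s)) := by
        refine setLIntegral_mono_ae' (measurableSet_ball.diff hA) ?_
        have : ∀ᵐ y : EuclideanSpace ℝ (Fin n), y ≠ p := by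
          rw [ae_iff]; simp
        filter_upwards [this] with y hyp hy
        refine ENNReal.ofReal_le_ofReal ?_
        have h0 : 0 < ‖p - y‖ := norm_pos_iff.2 (sub_ne_zero.2 hyp.symm)
        have h1 : ‖p - y‖ ≤ 2 * w := by
          have := hy.1
          rw [mem_ball, dist_comm, dist_eq_norm] at this
          exact this.le
        gcongr
    _ ≤ _ := lintegral_mono_set (fun y hy => hy.2)

lemma split_bound (n : ℕ) (s : ℝ) (E A : Set (EuclideanSpace ℝ (Fin n)))
    (h : interactionL n s A Eᶜ ≤ interactionL n s A (E \ A)) :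
    interactionL n s A Aᶜ ≤ 2 * interactionL n s A (E \ A) := by
  rw [two_mul]
  refine le_trans ?_ (add_le_add_left h _)
  unfold interactionL
  rw [← lintegral_add_left (kern_meas n s).lintegral_prod_right']
  refine lintegral_mono fun p => ?_
  refine le_trans (lintegral_mono_set (fun y hy => ?_)) (lintegral_union_le _ _ _)
  by_cases hy' : y ∈ E
  · exact Or.inr ⟨hy', hy⟩
  · exact Or.inl hy'

/-- The measure of `E ∩ B_t` can not decay slowly. -/
lemma key_bound (n : ℕ) (hn : 1 ≤ n) (s : ℝ) (hs : s ∈ Set.Ioo (0:ℝ) 1)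
    (Ω E : Set (EuclideanSpace ℝ (Fin n))) (hE : MeasurableSet E)
    (hsub : IsSubsolutionIn n s Ω E) (x : EuclideanSpace ℝ (Fin n)) (r τ t w : ℝ)
    (hr : ball x r ∩ E ⊆ Ω) (hτ : τ < t) (htr : t ≤ r) (hw : 0 < w)
    (hVt : volume (E ∩ ball x t) =
      ENNReal.ofReal (w ^ n * volume.real (ball (0 : EuclideanSpace ℝ (Fin n)) 1)))
    (hVτ : ENNReal.ofReal ((w / 2) ^ n * volume.real (ball (0 : EuclideanSpace ℝ (Fin n)) 1)) ≤
      volume (E ∩ ball x τ)) :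
    (t - τ) ^ s ≤ 2 * n * (1 / (1 - s) + 1 / s) * 2 ^ n * 2 ^ ((n : ℝ) + s) * w ^ s := by
  have hs0 := hs.1
  have hs1 := hs.2
  have hs1' : 0 < 1 - s := by linarith
  have hωt : volume (ball (0 : EuclideanSpace ℝ (Fin n)) 1) ≠ ⊤ := measure_ball_lt_top.ne
  have hω0 : 0 < volume.real (ball (0 : EuclideanSpace ℝ (Fin n)) 1) :=
    ENNReal.toReal_pos (measure_ball_pos _ _ one_pos).ne' hωt
  have hωe : volume (ball (0 : EuclideanSpace ℝ (Fin n)) 1) =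
      ENNReal.ofReal (volume.real (ball (0 : EuclideanSpace ℝ (Fin n)) 1)) :=
    (ENNReal.ofReal_toReal hωt).symm
  have hup := upper_bound n hn s hs E hE x τ t hτ
  have hlow : ∀ ρ ∈ Ioo τ t,
      ENNReal.ofReal (1 / (2 * w) ^ ((n : ℝ) + s)) *
      (ENNReal.ofReal (w ^ n) * volume (ball (0 : EuclideanSpace ℝ (Fin n)) 1)) *
        volume (E ∩ ball x τ) ≤
      2 * interactionL n s (E ∩ ball x ρ) (E \ (E ∩ ball x ρ)) := by
    intro ρ hρ
    have hm : MeasurableSet (E ∩ ball x ρ) := hE.inter measurableSet_ball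
    have h1 : volume (E ∩ ball x ρ) ≤
        ENNReal.ofReal (w ^ n) * volume (ball (0 : EuclideanSpace ℝ (Fin n)) 1) := by
      refine (measure_mono (inter_subset_inter_right _ (ball_subset_ball hρ.2.le))).trans ?_
      rw [hVt, hωe, ENNReal.ofReal_mul (by positivity)]
    have h2 := lower_bound n hn s hs _ hm w hw h1
    have h3 := split_bound n s E _ (hsub _ hm
      (fun y hy => ⟨hy.1, hr ⟨ball_subset_ball (hρ.2.le.trans htr) hy.2, hy.1⟩⟩))
    refine le_trans ?_ (h2.trans h3)
    gcongr
    exact hρ.1.le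
  have hint := setLIntegral_mono' (μ := volume) measurableSet_Ioo hlow
  rw [setLIntegral_const, lintegral_const_mul' _ _ (by simp), Real.volume_Ioo] at hint
  have hfin := hint.trans (mul_le_mul_right hup 2)
  rw [hVt, hωe] at hfin
  have hfin2 : ENNReal.ofReal (1 / (2 * w) ^ ((n : ℝ) + s) *
      (w ^ n * volume.real (ball (0 : EuclideanSpace ℝ (Fin n)) 1)) *
      ((w / 2) ^ n * volume.real (ball (0 : EuclideanSpace ℝ (Fin n)) 1)) * (t - τ)) ≤
      ENNReal.ofReal (2 * ((n * (volume.real (ball (0 : EuclideanSpace ℝ (Fin n)) 1) *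
        ((1 / (1 - s) + 1 / s) * (t - τ) ^ (1 - s)))) *
        (w ^ n * volume.real (ball (0 : EuclideanSpace ℝ (Fin n)) 1)))) := by
    have hd : 0 < t - τ := by linarith
    rw [ENNReal.ofReal_mul (by positivity), ENNReal.ofReal_mul (by positivity),
      ENNReal.ofReal_mul (by positivity), ENNReal.ofReal_mul (p := w ^ n) (by positivity),
      ENNReal.ofReal_mul (p := 2) (by positivity), ENNReal.ofReal_mul (p := n * _) (by positivity),
      ENNReal.ofReal_mul (p := w ^ n) (by positivity)]
    rw [ENNReal.ofReal_mul (p := w ^ n) (by positivity)] at hfin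
    have h2 : ENNReal.ofReal 2 = 2 := by simp
    rw [h2]
    refine le_trans ?_ hfin
    gcongr
  have hd : 0 < t - τ := by linarith
  rw [ENNReal.ofReal_le_ofReal_iff (by positivity)] at hfin2
  set ω := volume.real (ball (0 : EuclideanSpace ℝ (Fin n)) 1)
  set κ := 1 / (1 - s) + 1 / s
  have e1 : (t - τ) ^ s * (t - τ) ^ (1 - s) = t - τ := by
    rw [← Real.rpow_add hd]; simp
  have e2 : (2 * w) ^ ((n : ℝ) + s) = 2 ^ ((n : ℝ) + s) * w ^ n * w ^ s := by
    rw [Real.mul_rpow (by norm_num) hw.le, Real.rpow_add hw, Real.rpow_natCast]; ring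
  have hD : 0 < (t - τ) ^ (1 - s) := by positivity
  have hP : 0 < (2 * w) ^ ((n : ℝ) + s) := by positivity
  have hwn : 0 < w ^ n := by positivity
  have hc : 0 < w ^ n * ω * ω * (t - τ) ^ (1 - s) := by positivity
  have h4 : (w ^ n * ω * ω * (t - τ) ^ (1 - s)) * ((t - τ) ^ s * w ^ n) ≤
      (w ^ n * ω * ω * (t - τ) ^ (1 - s)) * (2 * n * κ * 2 ^ n * (2 * w) ^ ((n : ℝ) + s)) := by
    have := mul_le_mul_of_nonneg_left hfin2 (show 0 ≤ (2 * w) ^ ((n : ℝ) + s) * 2 ^ n by positivity)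
    have e3 : (2 * w) ^ ((n : ℝ) + s) * 2 ^ n * (1 / (2 * w) ^ ((n : ℝ) + s) *
      (w ^ n * ω) * ((w / 2) ^ n * ω) * (t - τ)) =
      (w ^ n * ω * ω * (t - τ) ^ (1 - s)) * ((t - τ) ^ s * w ^ n) := by
      nth_rewrite 1 [← e1]
      rw [div_pow]; field_simp
    rw [e3] at this
    refine this.trans (le_of_eq ?_)
    ring
  have h5 := le_of_mul_le_mul_left h4 hc
  rw [e2] at h5
  refine le_of_mul_le_mul_right (h5.trans (le_of_eq ?_)) hwn
  ring

/-- Uniform density estimate: there is `c > 0` depending only on `n, s` such that if `E` is a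
variational subsolution in `Ω`, `x ∈ ∂E` (in the measure-theoretic sense: every ball around `x`
meets both `E` and `C E` in positive measure) and `B_r(x) ∩ E ⊆ Ω`, then
`|E ∩ B_r(x)| ≥ c rⁿ`. -/
theorem uniform_density_estimate (n : ℕ) (hn : 1 ≤ n) (s : ℝ) (hs : s ∈ Set.Ioo (0:ℝ) 1) :
    ∃ c : ℝ, 0 < c ∧ ∀ Ω E : Set (EuclideanSpace ℝ (Fin n)), IsOpen Ω → MeasurableSet E →
      IsSubsolutionIn n s Ω E →
      ∀ x : EuclideanSpace ℝ (Fin n), ∀ r : ℝ, 0 < r →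
        (∀ ρ : ℝ, 0 < ρ → 0 < volume (ball x ρ ∩ E) ∧ 0 < volume (ball x ρ \ E)) →
        ball x r ∩ E ⊆ Ω →
        ENNReal.ofReal (c * r ^ (n : ℕ)) ≤ volume (E ∩ ball x r) := by
  have hs0 := hs.1
  have hs1 := hs.2
  have hs1' : 0 < 1 - s := by linarith
  have hn0 : n ≠ 0 := by omega
  have hωt : volume (ball (0 : EuclideanSpace ℝ (Fin n)) 1) ≠ ⊤ := measure_ball_lt_top.ne
  have hω0 : 0 < volume.real (ball (0 : EuclideanSpace ℝ (Fin n)) 1) :=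
    ENNReal.toReal_pos (measure_ball_pos _ _ one_pos).ne' hωt
  obtain ⟨M, hM⟩ : ∃ M, M = 2 * n * (1 / (1 - s) + 1 / s) * 2 ^ n * 2 ^ ((n : ℝ) + s) := ⟨_, rfl⟩
  have hM0 : 0 ≤ M := by rw [hM]; positivity
  obtain ⟨K, hK⟩ : ∃ K, K = M ^ (1 / s) + 1 := ⟨_, rfl⟩
  have hK0 : 0 < K := by rw [hK]; positivity
  have hKs : M < K ^ s := by
    have h1 : (M ^ (1 / s)) ^ s = M := by
      rw [← Real.rpow_mul hM0, one_div_mul_cancel hs0.ne', Real.rpow_one]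
    nth_rewrite 1 [← h1]
    exact Real.rpow_lt_rpow (by positivity) (by rw [hK]; linarith) hs0
  set ω := volume.real (ball (0 : EuclideanSpace ℝ (Fin n)) 1) with hω
  refine ⟨ω / (2 * K) ^ n, by positivity, ?_⟩
  intro Ω E _ hE hsub x r hr hx hΩ
  obtain ⟨W, hW⟩ : ∃ W : ℝ → ℝ, ∀ t, W t = (volume.real (E ∩ ball x t) / ω) ^ (1 / (n : ℝ)) :=
    ⟨_, fun _ => rfl⟩
  have hfin : ∀ t, volume (E ∩ ball x t) ≠ ⊤ := fun t =>
    ((measure_mono inter_subset_right).trans_lt measure_ball_lt_top).ne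
  have hV0 : ∀ t, 0 < t → 0 < volume.real (E ∩ ball x t) := fun t ht =>
    ENNReal.toReal_pos (by rw [inter_comm]; exact (hx t ht).1.ne') (hfin t)
  have hW0 : ∀ t, 0 < t → 0 < W t := fun t ht => by
    rw [hW]; have := hV0 t ht; positivity
  have hWn : ∀ t, W t ^ n * ω = volume.real (E ∩ ball x t) := fun t => by
    rw [hW, one_div, Real.rpow_inv_natCast_pow (by positivity) hn0]
    field_simp
  have hVe : ∀ t, volume (E ∩ ball x t) = ENNReal.ofReal (W t ^ n * ω) := fun t => by
    rw [hWn]; exact (ENNReal.ofReal_toReal (hfin t)).symm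
  have hmono : ∀ a b, a ≤ b → W a ≤ W b := fun a b hab => by
    rw [hW, hW]
    have : volume.real (E ∩ ball x a) ≤ volume.real (E ∩ ball x b) :=
      measureReal_mono (inter_subset_inter_right _ (ball_subset_ball hab)) (hfin b)
    gcongr
  have hstep : ∀ t, 0 < t → t ≤ r → 0 < t - K * W t → W (t - K * W t) ≤ W t / 2 := by
    intro t ht htr hτ
    by_contra! hcon
    have hwt := hW0 t ht
    have := key_bound n hn s hs Ω E hE hsub x r (t - K * W t) t (W t) hΩ
      (by have := mul_pos hK0 hwt; linarith) htr hwt (hVe t) (by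
        rw [hVe (t - K * W t)]
        refine ENNReal.ofReal_le_ofReal ?_
        gcongr)
    rw [← hM, sub_sub_cancel, Real.mul_rpow hK0.le hwt.le] at this
    have hws : 0 < W t ^ s := by positivity
    exact absurd (le_of_mul_le_mul_right this hws) (not_le.2 hKs)
  have hmain : r ≤ 2 * K * W r := by
    by_contra! hcon
    have hΦ : 0 < r - 2 * K * W r := by linarith
    have hind : ∀ k : ℕ, ∃ t, t ≤ r ∧ r - 2 * K * W r ≤ t - 2 * K * W t ∧ 0 < t ∧
        W t ≤ W r / 2 ^ k := by
      intro k
      induction k with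
      | zero => exact ⟨r, le_rfl, le_rfl, hr, by simp⟩
      | succ k ih =>
        obtain ⟨t, h1, h2, h3, h4⟩ := ih
        have hwt := mul_pos hK0 (hW0 t h3)
        have h5 : 0 < t - K * W t := by linarith
        have h6 := hstep t h3 h1 h5
        have h7 := mul_le_mul_of_nonneg_left h6 hK0.le
        refine ⟨t - K * W t, by linarith, by linarith, h5, ?_⟩
        rw [pow_succ, ← div_div]
        linarith
    have hle : ∀ k : ℕ, W (r - 2 * K * W r) ≤ W r / 2 ^ k := by
      intro k
      obtain ⟨t, h1, h2, h3, h4⟩ := hind k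
      have hwt := mul_pos hK0 (hW0 t h3)
      exact (hmono _ t (by linarith)).trans h4
    have hlim : Tendsto (fun k : ℕ => W r / 2 ^ k) atTop (nhds 0) :=
      tendsto_const_nhds.div_atTop (tendsto_pow_atTop_atTop_of_one_lt (by norm_num))
    exact absurd (ge_of_tendsto' hlim hle) (not_le.2 (hW0 _ hΦ))
  rw [hVe]
  refine ENNReal.ofReal_le_ofReal ?_
  have h1 : r ^ n ≤ (2 * K) ^ n * W r ^ n := by
    rw [← mul_pow]; gcongr
  rw [div_mul_eq_mul_div, div_le_iff₀ (by positivity)]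
  nlinarith
end

section
/- Let E_k be minimizers for J_{B₁} with χ_{E_k} → χ_E in L^1_loc. Then for every ε > 0 there exists K such that for all k ≥ K, every point of ∂E_k ∩ B_{1/2} is within distance ε of ∂E. -/
open MeasureTheory Metric Filter Set

/-- `J_Ω(E) = L(E ∩ Ω, C E) + L(E \ Ω, C E ∩ Ω)`. -/
noncomputable def Jfun (n : ℕ) (s : ℝ) (Ω E : Set (EuclideanSpace ℝ (Fin n))) : ENNReal :=
  interactionL n s (E ∩ Ω) Eᶜ + interactionL n s (E \ Ω) (Eᶜ ∩ Ω)

/-- `E` is a minimizer of `J` in the unit ball. -/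
def IsMinimizerB1 (n : ℕ) (s : ℝ) (E : Set (EuclideanSpace ℝ (Fin n))) : Prop :=
  MeasurableSet E ∧ ∀ F : Set (EuclideanSpace ℝ (Fin n)), MeasurableSet F →
    F \ ball (0 : EuclideanSpace ℝ (Fin n)) 1 = E \ ball (0 : EuclideanSpace ℝ (Fin n)) 1 →
    Jfun n s (ball (0 : EuclideanSpace ℝ (Fin n)) 1) E ≤
      Jfun n s (ball (0 : EuclideanSpace ℝ (Fin n)) 1) F

/-- Measure-theoretic boundary (topological boundary after normalization). -/
def mtBoundary (n : ℕ) (E : Set (EuclideanSpace ℝ (Fin n))) : Set (EuclideanSpace ℝ (Fin n)) :=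
  {x | ∀ ρ : ℝ, 0 < ρ → 0 < volume (ball x ρ ∩ E) ∧ 0 < volume (ball x ρ \ E)}

/-- `χ_{A_k} → χ_A` in `L¹_loc`. -/
def L1locIndicatorTendsto (n : ℕ) (A : ℕ → Set (EuclideanSpace ℝ (Fin n)))
    (Alim : Set (EuclideanSpace ℝ (Fin n))) : Prop :=
  ∀ K : Set (EuclideanSpace ℝ (Fin n)), IsCompact K →
    Tendsto (fun k => ∫ x in K,
      |Set.indicator (A k) (fun _ => (1:ℝ)) x - Set.indicator Alim (fun _ => (1:ℝ)) x|)
      atTop (nhds 0)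


/-- The kernel. -/
noncomputable def kerK (n : ℕ) (s : ℝ) (z : EuclideanSpace ℝ (Fin n)) : ENNReal :=
  ENNReal.ofReal (1 / ‖z‖ ^ ((n : ℝ) + s))

lemma measurable_kerK (n : ℕ) (s : ℝ) : Measurable (kerK n s) := by
  unfold kerK; fun_prop

lemma interactionL_eq (n : ℕ) (s : ℝ) (A B : Set (EuclideanSpace ℝ (Fin n))) :
    interactionL n s A B = ∫⁻ x in A, ∫⁻ y in B, kerK n s (x - y) := rfl

lemma kerK_neg (n : ℕ) (s : ℝ) (x y : EuclideanSpace ℝ (Fin n)) :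
    kerK n s (x - y) = kerK n s (y - x) := by
  unfold kerK; rw [norm_sub_rev]

lemma L_symm (n : ℕ) (s : ℝ) (A B : Set (EuclideanSpace ℝ (Fin n))) :
    interactionL n s A B = interactionL n s B A := by
  rw [interactionL_eq, interactionL_eq, lintegral_lintegral_swap]
  · congr 1; ext y; congr 1; ext x; exact kerK_neg n s _ _
  · exact ((measurable_kerK n s).comp (measurable_fst.sub measurable_snd)).aemeasurable

lemma L_union_left (n : ℕ) (s : ℝ) {A A' B : Set (EuclideanSpace ℝ (Fin n))}
    (hA' : MeasurableSet A') (hd : Disjoint A A') :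
    interactionL n s (A ∪ A') B = interactionL n s A B + interactionL n s A' B :=
  lintegral_union hA' hd

lemma L_union_right (n : ℕ) (s : ℝ) {A B B' : Set (EuclideanSpace ℝ (Fin n))}
    (hB' : MeasurableSet B') (hd : Disjoint B B') :
    interactionL n s A (B ∪ B') = interactionL n s A B + interactionL n s A B' := by
  rw [L_symm, L_union_left n s hB' hd, L_symm n s B, L_symm n s B']

lemma L_mono (n : ℕ) (s : ℝ) {A A' B B' : Set (EuclideanSpace ℝ (Fin n))}
    (hA : A ⊆ A') (hB : B ⊆ B') : interactionL n s A B ≤ interactionL n s A' B' :=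
  (lintegral_mono_set hA).trans (lintegral_mono fun _ => lintegral_mono_set hB)

lemma Jfun_compl (n : ℕ) (s : ℝ) {Ω E : Set (EuclideanSpace ℝ (Fin n))}
    (hΩ : MeasurableSet Ω) (hE : MeasurableSet E) : Jfun n s Ω Eᶜ = Jfun n s Ω E := by
  unfold Jfun
  rw [compl_compl]
  have e1 : interactionL n s (Eᶜ ∩ Ω) E
      = interactionL n s (Eᶜ ∩ Ω) (E ∩ Ω) + interactionL n s (Eᶜ ∩ Ω) (E \ Ω) := by
    rw [← L_union_right n s (hE.diff hΩ) (disjoint_sdiff_right.mono_left inter_subset_right),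
      inter_union_sdiff]
  have e2 : interactionL n s (E ∩ Ω) Eᶜ
      = interactionL n s (E ∩ Ω) (Eᶜ ∩ Ω) + interactionL n s (E ∩ Ω) (Eᶜ \ Ω) := by
    rw [← L_union_right n s (hE.compl.diff hΩ)
      (disjoint_sdiff_right.mono_left inter_subset_right), inter_union_sdiff]
  rw [e1, e2, L_symm n s (Eᶜ ∩ Ω) (E ∩ Ω), L_symm n s (Eᶜ ∩ Ω) (E \ Ω),
    L_symm n s (Eᶜ \ Ω) (E ∩ Ω)]
  ring

lemma IsMinimizerB1.compl {n : ℕ} {s : ℝ} {E : Set (EuclideanSpace ℝ (Fin n))}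
    (h : IsMinimizerB1 n s E) : IsMinimizerB1 n s Eᶜ := by
  refine ⟨h.1.compl, fun F hF hFE => ?_⟩
  rw [Jfun_compl n s measurableSet_ball h.1, ← Jfun_compl n s measurableSet_ball hF]
  refine h.2 Fᶜ hF.compl ?_
  ext x
  have := congrArg (x ∈ ·) hFE
  simp only [Set.mem_sdiff, mem_compl_iff, eq_iff_iff] at this ⊢
  tauto

/-- Tail estimate for the kernel. -/
lemma tail_bound (n : ℕ) (s : ℝ) (hs : 0 < s) :
    ∃ C : ℝ, 0 < C ∧ ∀ d : ℝ, 0 < d →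
      ∫⁻ z in {z : EuclideanSpace ℝ (Fin n) | d ≤ ‖z‖}, kerK n s z
        ≤ ENNReal.ofReal (C * d ^ (-s)) := by
  have hms : ∀ d : ℝ, MeasurableSet {z : EuclideanSpace ℝ (Fin n) | d ≤ ‖z‖} := fun d =>
    measurableSet_le measurable_const measurable_norm
  have hfin : ∫⁻ z in {z : EuclideanSpace ℝ (Fin n) | 1 ≤ ‖z‖}, kerK n s z < ⊤ := by
    have h1 := finite_integral_one_add_norm (E := EuclideanSpace ℝ (Fin n)) (μ := volume)
      (r := n + s) (by simp [hs])
    have h2 : ∫⁻ z in {z : EuclideanSpace ℝ (Fin n) | 1 ≤ ‖z‖}, kerK n s z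
        ≤ ∫⁻ z : EuclideanSpace ℝ (Fin n), ENNReal.ofReal (2 ^ ((n : ℝ) + s)) *
            ENNReal.ofReal ((1 + ‖z‖) ^ (-((n : ℝ) + s))) := by
      refine (setLIntegral_mono' (hms 1) fun z hz => ?_).trans (setLIntegral_le_lintegral _ _)
      have hz : 1 ≤ ‖z‖ := hz
      unfold kerK
      rw [← ENNReal.ofReal_mul (by positivity)]
      apply ENNReal.ofReal_le_ofReal
      rw [Real.rpow_neg (by positivity), ← div_eq_mul_inv, div_le_div_iff₀ (by positivity)
        (by positivity), one_mul, ← Real.mul_rpow (by positivity) (by positivity)]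
      apply Real.rpow_le_rpow (by positivity) (by linarith) (by positivity)
    refine h2.trans_lt ?_
    rw [lintegral_const_mul _ (by fun_prop)]
    exact ENNReal.mul_lt_top ENNReal.ofReal_lt_top h1
  set C0 := ∫⁻ z in {z : EuclideanSpace ℝ (Fin n) | 1 ≤ ‖z‖}, kerK n s z with hC0
  refine ⟨C0.toReal + 1, by positivity, fun d hd => ?_⟩
  have hmap := Measure.map_addHaar_smul (volume : Measure (EuclideanSpace ℝ (Fin n))) hd.ne'
  set f : EuclideanSpace ℝ (Fin n) → ENNReal := {z | d ≤ ‖z‖}.indicator (kerK n s) with hf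
  have hfm : Measurable f := (measurable_kerK n s).indicator (hms d)
  have hl : ∫⁻ w, f (d • w) = ENNReal.ofReal (d ^ (-((n:ℝ) + s))) * C0 := by
    rw [hC0, ← lintegral_indicator (hms 1), ← lintegral_const_mul _
      ((measurable_kerK n s).indicator (hms 1))]
    congr 1; ext w
    by_cases hw : 1 ≤ ‖w‖
    · have : d ≤ ‖d • w‖ := by
        rw [norm_smul, Real.norm_of_nonneg hd.le]; nlinarith
      rw [hf, indicator_of_mem (by exact this), indicator_of_mem (by exact hw)]
      unfold kerK
      rw [← ENNReal.ofReal_mul (by positivity), norm_smul, Real.norm_of_nonneg hd.le,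
        Real.mul_rpow hd.le (norm_nonneg _), Real.rpow_neg hd.le]
      congr 1
      field_simp
    · have : ¬ d ≤ ‖d • w‖ := by
        rw [norm_smul, Real.norm_of_nonneg hd.le]; push Not at hw ⊢; nlinarith
      rw [hf, indicator_of_notMem (by exact this), indicator_of_notMem (by exact hw), mul_zero]
  have hr : ∫⁻ w, f (d • w) = ENNReal.ofReal ((d ^ n)⁻¹) * ∫⁻ z, f z := by
    rw [← lintegral_map hfm (measurable_const_smul d), hmap, lintegral_smul_measure]
    simp [abs_of_pos hd]
  rw [← lintegral_indicator (hms d)]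
  have : ∫⁻ z, f z = ENNReal.ofReal (d ^ n) * (ENNReal.ofReal ((d ^ n)⁻¹) * ∫⁻ z, f z) := by
    rw [← mul_assoc, ← ENNReal.ofReal_mul (by positivity), mul_inv_cancel₀ (by positivity)]
    simp
  rw [← hf, this, ← hr, hl, ← mul_assoc, ← ENNReal.ofReal_mul (by positivity),
    ← ENNReal.ofReal_toReal hfin.ne, ← ENNReal.ofReal_mul (by positivity),
    ENNReal.toReal_ofReal ENNReal.toReal_nonneg]
  apply ENNReal.ofReal_le_ofReal
  rw [neg_add, Real.rpow_add hd, Real.rpow_neg hd.le, Real.rpow_natCast, ← mul_assoc,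
    mul_inv_cancel₀ (by positivity), one_mul, mul_comm]
  have := Real.rpow_nonneg hd.le (-s)
  nlinarith

/-- Interaction of a point of a ball with the complement of that ball. -/
lemma point_ball_bound {n : ℕ} {s C : ℝ}
    (hC : ∀ d : ℝ, 0 < d → ∫⁻ z in {z : EuclideanSpace ℝ (Fin n) | d ≤ ‖z‖}, kerK n s z
        ≤ ENNReal.ofReal (C * d ^ (-s)))
    (x₀ x : EuclideanSpace ℝ (Fin n)) (r : ℝ) (hx : ‖x - x₀‖ < r) :
    ∫⁻ y in (ball x₀ r)ᶜ, kerK n s (x - y) ≤ ENNReal.ofReal (C * (r - ‖x - x₀‖) ^ (-s)) := by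
  refine le_trans ?_ (hC (r - ‖x - x₀‖) (by linarith))
  have hms : MeasurableSet {z : EuclideanSpace ℝ (Fin n) | r - ‖x - x₀‖ ≤ ‖z‖} :=
    measurableSet_le measurable_const measurable_norm
  rw [← lintegral_indicator hms, ← lintegral_sub_left_eq_self (indicator _ _) x,
    ← lintegral_indicator measurableSet_ball.compl]
  refine lintegral_mono fun y => ?_
  by_cases hy : y ∈ (ball x₀ r)ᶜ
  · rw [indicator_of_mem hy, indicator_of_mem]
    have hy : r ≤ ‖y - x₀‖ := by simpa [dist_eq_norm] using hy
    have := norm_sub_le_norm_sub_add_norm_sub y x x₀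
    rw [norm_sub_rev y x] at this
    simp only [mem_ofPred_eq]; linarith
  · rw [indicator_of_notMem hy]; exact zero_le

/-- Finiteness of the perimeter of the unit ball. -/
lemma per_ball_lt_top (n : ℕ) (hn : 1 ≤ n) (s : ℝ) (hs : s ∈ Set.Ioo (0:ℝ) 1) :
    interactionL n s (ball 0 1) (ball 0 1)ᶜ < ⊤ := by
  obtain ⟨C, hC0, hC⟩ := tail_bound n s hs.1
  have : Nonempty (Fin n) := ⟨⟨0, hn⟩⟩
  have hi : IntegrableOn (fun x : EuclideanSpace ℝ (Fin n) => (1 - ‖x‖) ^ (-s)) (ball 0 1) := by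
    rw [integrableOn_fun_norm_addHaar volume (f := fun t : ℝ => (1 - t) ^ (-s))]
    have h1 : IntervalIntegrable (fun t : ℝ => t ^ (-s)) volume 0 1 :=
      intervalIntegral.intervalIntegrable_rpow' (by linarith [hs.2])
    have h2 := (h1.comp_sub_left 1).symm
    simp only [sub_self, sub_zero] at h2
    rw [intervalIntegrable_iff_integrableOn_Ioo_of_le (by norm_num)] at h2
    refine Integrable.mono h2 (by fun_prop) ?_
    rw [ae_restrict_iff' measurableSet_Ioo]
    refine Eventually.of_forall fun t ht => ?_
    rw [norm_smul]
    have : ‖t ^ (Module.finrank ℝ (EuclideanSpace ℝ (Fin n)) - 1)‖ ≤ 1 := by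
      rw [norm_pow]; apply pow_le_one₀ (norm_nonneg _)
      rw [Real.norm_of_nonneg ht.1.le]; exact ht.2.le
    exact mul_le_of_le_one_left (norm_nonneg _) this
  have hi2 := hi.const_mul C
  rw [interactionL_eq]
  refine lt_of_le_of_lt (setLIntegral_mono' measurableSet_ball fun x hx => ?_)
    (hi2.lintegral_lt_top)
  have hx : ‖x - 0‖ < 1 := by simpa using hx
  simpa using point_ball_bound hC 0 x 1 hx

lemma IsMinimizerB1.finite {n : ℕ} (hn : 1 ≤ n) {s : ℝ} (hs : s ∈ Set.Ioo (0:ℝ) 1)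
    {E : Set (EuclideanSpace ℝ (Fin n))} (h : IsMinimizerB1 n s E) :
    Jfun n s (ball 0 1) E < ⊤ := by
  refine lt_of_le_of_lt (h.2 (E \ ball 0 1) (h.1.diff measurableSet_ball) (by simp)) ?_
  unfold Jfun
  have h0 : (E \ ball 0 1) ∩ ball 0 1 = ∅ := by ext x; simp
  have h1 : interactionL n s ((E \ ball 0 1) ∩ ball 0 1) (E \ ball 0 1)ᶜ = 0 := by
    rw [h0, interactionL_eq]; simp
  rw [h1, zero_add]
  refine lt_of_le_of_lt ?_ (per_ball_lt_top n hn s hs)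
  rw [L_symm n s (ball 0 1)]
  refine L_mono n s ?_ inter_subset_right
  intro x hx; exact hx.1.2

/-- Removing `A ⊆ E ∩ B₁` gives `L(A, Eᶜ) ≤ L(A, E \ A)`. -/
lemma IsMinimizerB1.sub {n : ℕ} (hn : 1 ≤ n) {s : ℝ} (hs : s ∈ Set.Ioo (0:ℝ) 1)
    {E A : Set (EuclideanSpace ℝ (Fin n))} (h : IsMinimizerB1 n s E)
    (hA : MeasurableSet A) (hAE : A ⊆ E) (hAB : A ⊆ ball 0 1) :
    interactionL n s A Eᶜ ≤ interactionL n s A (E \ A) := by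
  have hJ := h.finite hn hs
  have hm := h.2 (E \ A) (h.1.diff hA) (by
    ext x; simp only [Set.mem_sdiff]
    constructor
    · tauto
    · intro hx; exact ⟨⟨hx.1, fun hxA => hx.2 (hAB hxA)⟩, hx.2⟩)
  have hE := h.1
  set Ω : Set (EuclideanSpace ℝ (Fin n)) := ball 0 1 with hΩ
  have hΩm : MeasurableSet Ω := measurableSet_ball
  unfold Jfun at hm hJ
  have s1 : E ∩ Ω = (E ∩ Ω) \ A ∪ A := by
    rw [sdiff_union_self, eq_comm, union_eq_left]; exact subset_inter hAE hAB
  have e1 : interactionL n s (E ∩ Ω) Eᶜ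
      = interactionL n s ((E ∩ Ω) \ A) Eᶜ + interactionL n s A Eᶜ := by
    conv_lhs => rw [s1]
    exact L_union_left n s hA disjoint_sdiff_left
  have s2 : (E \ A)ᶜ = Eᶜ ∪ A := by
    ext x; simp only [mem_compl_iff, Set.mem_sdiff, mem_union]; tauto
  have s3 : (E \ A) ∩ Ω = (E ∩ Ω) \ A := by
    ext x; simp only [mem_inter_iff, Set.mem_sdiff]; tauto
  have s4 : (E \ A) \ Ω = E \ Ω := by
    ext x; have := @hAB x; simp only [Set.mem_sdiff]; tauto
  have s5 : (Eᶜ ∪ A) ∩ Ω = (Eᶜ ∩ Ω) ∪ A := by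
    ext x; have := @hAB x; simp only [mem_inter_iff, mem_union]; tauto
  have d1 : Disjoint Eᶜ A := by
    rw [disjoint_compl_left_iff_subset]; exact hAE
  rw [s2, s3, s4, s5, L_union_right n s hA d1,
    L_union_right n s hA (d1.mono_left inter_subset_left), e1] at hm
  rw [e1] at hJ
  have s6 : E \ A = (E ∩ Ω) \ A ∪ (E \ Ω) := by
    ext x; have := @hAB x; simp only [mem_inter_iff, Set.mem_sdiff, mem_union]; tauto
  rw [s6, L_union_right n s (hE.diff hΩm) (disjoint_sdiff_right.mono_left
    (sdiff_subset.trans inter_subset_right)), L_symm n s A ((E ∩ Ω) \ A), L_symm n s A (E \ Ω)]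
  set a := interactionL n s ((E ∩ Ω) \ A) Eᶜ
  set b := interactionL n s (E \ Ω) (Eᶜ ∩ Ω)
  have hab : a + b ≠ ⊤ := by
    refine ne_top_of_le_ne_top hJ.ne ?_
    gcongr; exact le_self_add
  rw [← ENNReal.add_le_add_iff_left hab]
  calc _ = a + interactionL n s A Eᶜ + b := by ring
    _ ≤ _ := hm
    _ = _ := by ring

/-- Fractional isoperimetric inequality. -/
lemma isoper (n : ℕ) (hn : 1 ≤ n) (s : ℝ) (hs : s ∈ Set.Ioo (0:ℝ) 1) :
    ∃ c : ℝ, 0 < c ∧ ∀ A : Set (EuclideanSpace ℝ (Fin n)), MeasurableSet A → volume A ≠ ⊤ →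
      ENNReal.ofReal (c * (volume A).toReal ^ (1 - s / n)) ≤ interactionL n s A Aᶜ := by
  have : Nonempty (Fin n) := ⟨⟨0, hn⟩⟩
  have hn' : (1 : ℝ) ≤ n := by exact_mod_cast hn
  have hn0 : (0 : ℝ) < n := by linarith
  have hα : 0 < 1 - s / n := by
    rw [sub_pos, div_lt_one hn0]; linarith [hs.2]
  set w : ℝ := (volume (ball (0 : EuclideanSpace ℝ (Fin n)) 1)).toReal with hw
  have hw0 : 0 < w := ENNReal.toReal_pos (measure_ball_pos _ _ one_pos).ne' measure_ball_lt_top.ne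
  refine ⟨(2 / w) ^ (-((n + s) / n)), by positivity, fun A hA hAt => ?_⟩
  set m : ℝ := (volume A).toReal with hm
  rcases (ENNReal.toReal_nonneg : 0 ≤ (volume A).toReal).eq_or_lt with h0 | hpos
  · rw [hm, ← h0, Real.zero_rpow hα.ne']; simp
  rw [← hm] at hpos
  set ρ : ℝ := (2 * m / w) ^ (1 / (n : ℝ)) with hρ
  have hρ0 : 0 < ρ := by positivity
  have hρn : ρ ^ n = 2 * m / w := by
    rw [hρ, ← Real.rpow_natCast, ← Real.rpow_mul (by positivity), one_div,
      inv_mul_cancel₀ hn0.ne', Real.rpow_one]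
  have hball : ∀ x : EuclideanSpace ℝ (Fin n), volume (ball x ρ) = ENNReal.ofReal (2 * m) := by
    intro x
    rw [Measure.addHaar_ball volume x hρ0.le, finrank_euclideanSpace_fin, hρn,
      ← ENNReal.ofReal_toReal (measure_ball_lt_top (μ := volume) (x := (0 :
        EuclideanSpace ℝ (Fin n))) (r := 1)).ne, ← hw, ← ENNReal.ofReal_mul (by positivity)]
    congr 1; field_simp
  have hAm : volume A = ENNReal.ofReal m := (ENNReal.ofReal_toReal hAt).symm
  have hpt : ∀ x : EuclideanSpace ℝ (Fin n),
      ENNReal.ofReal (1 / ρ ^ ((n : ℝ) + s)) * ENNReal.ofReal m ≤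
        ∫⁻ y in Aᶜ, kerK n s (x - y) := by
    intro x
    have hS : ENNReal.ofReal m ≤ volume ((ball x ρ \ A) \ {x}) := by
      rw [measure_sdiff_null (measure_singleton x)]
      refine le_trans ?_ (le_measure_sdiff)
      rw [hball, hAm, ← ENNReal.ofReal_sub _ hpos.le]
      apply le_of_eq; congr 1; ring
    have hSm : MeasurableSet ((ball x ρ \ A) \ {x}) :=
      (measurableSet_ball.diff hA).diff (measurableSet_singleton x)
    calc _ ≤ ENNReal.ofReal (1 / ρ ^ ((n : ℝ) + s)) * volume ((ball x ρ \ A) \ {x}) := by gcongr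
      _ = ∫⁻ y in (ball x ρ \ A) \ {x}, ENNReal.ofReal (1 / ρ ^ ((n : ℝ) + s)) := by
          rw [setLIntegral_const]
      _ ≤ ∫⁻ y in (ball x ρ \ A) \ {x}, kerK n s (x - y) := by
          refine setLIntegral_mono' hSm fun y hy => ?_
          have h1 : ‖x - y‖ < ρ := by
            have := hy.1.1; rwa [mem_ball', dist_eq_norm] at this
          have h2 : 0 < ‖x - y‖ := by
            rw [norm_pos_iff, sub_ne_zero]; exact fun h => hy.2 h.symm
          have := hs.1
          unfold kerK
          gcongr
      _ ≤ _ := lintegral_mono_set (fun y hy => hy.1.2)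
  rw [interactionL_eq]
  calc _ = ∫⁻ x in A, ENNReal.ofReal (1 / ρ ^ ((n : ℝ) + s)) * ENNReal.ofReal m := by
        rw [setLIntegral_const, hAm, ← ENNReal.ofReal_mul (by positivity),
          ← ENNReal.ofReal_mul (by positivity)]
        congr 1
        have e1 : (ρ ^ ((n : ℝ) + s)) = (2 / w) ^ ((n + s) / n) * m ^ ((n + s) / n) := by
          rw [← Real.mul_rpow (by positivity) hpos.le, hρ, ← Real.rpow_mul (by positivity)]
          congr 1 <;> field_simp
        have e2 : m ^ (1 - s / n) = m * m / m ^ ((n + s) / n) := by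
          have : 1 - s / n = 1 + 1 - (n + s) / n := by field_simp; ring
          rw [this, Real.rpow_sub hpos, Real.rpow_add hpos, Real.rpow_one]
        rw [e1, e2, Real.rpow_neg (by positivity)]
        field_simp
    _ ≤ _ := lintegral_mono fun x => hpt x

lemma inner_bound (s : ℝ) (hs : s ∈ Set.Ioo (0:ℝ) 1) (C : ℝ) (hC : 0 < C) (t R : ℝ)
    (ht : 0 ≤ t) (htR : t < R) (hR : R ≤ 1) :
    ∫⁻ ρ in Ioo t R, ENNReal.ofReal (C * (ρ - t) ^ (-s)) ≤ ENNReal.ofReal (C / (1 - s)) := by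
  have h1 : IntervalIntegrable (fun u : ℝ => u ^ (-s)) volume 0 (R - t) :=
    intervalIntegral.intervalIntegrable_rpow' (by linarith [hs.2])
  have h2 := (h1.comp_sub_right t)
  simp only [zero_add, sub_add_cancel] at h2
  have h3 : ∫ ρ in t..R, (ρ - t) ^ (-s) = (R - t) ^ (1 - s) / (1 - s) := by
    rw [intervalIntegral.integral_comp_sub_right (fun u : ℝ => u ^ (-s)),
      integral_rpow (Or.inl (by linarith [hs.2]))]
    have : -s + 1 = 1 - s := by ring
    rw [this, sub_self, Real.zero_rpow (by linarith [hs.2]), sub_zero]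
  have h4 := h2.const_mul C
  rw [intervalIntegrable_iff_integrableOn_Ioo_of_le htR.le] at h4
  rw [← ofReal_integral_eq_lintegral_ofReal h4]
  · apply ENNReal.ofReal_le_ofReal
    rw [← integral_Ioc_eq_integral_Ioo, ← intervalIntegral.integral_of_le htR.le,
      intervalIntegral.integral_const_mul, h3, ← mul_div_assoc]
    have : (R - t) ^ (1 - s) ≤ 1 :=
      Real.rpow_le_one (by linarith) (by linarith) (by linarith [hs.2])
    have h5 : 0 < 1 - s := by linarith [hs.2]
    gcongr
    nlinarith
  · rw [EventuallyLE, ae_restrict_iff' measurableSet_Ioo]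
    refine Eventually.of_forall fun ρ hρ => ?_
    have : 0 < ρ - t := by linarith [hρ.1]
    simp only [Pi.zero_apply]
    positivity

set_option maxHeartbeats 1000000 in
lemma main_ineq (n : ℕ) (hn : 1 ≤ n) (s : ℝ) (hs : s ∈ Set.Ioo (0:ℝ) 1) :
    ∃ M : ℝ, 0 < M ∧ ∀ E : Set (EuclideanSpace ℝ (Fin n)), IsMinimizerB1 n s E →
      ∀ (x₀ : EuclideanSpace ℝ (Fin n)) (r R : ℝ), 0 < r → r < R → R ≤ 1 →
        ball x₀ R ⊆ ball 0 1 →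
        (volume (ball x₀ r ∩ E)).toReal ^ (1 - s / n) * (R - r) ≤
          M * (volume (ball x₀ R ∩ E)).toReal := by
  obtain ⟨C, hC0, hC⟩ := tail_bound n s hs.1
  obtain ⟨c, hc0, hc⟩ := isoper n hn s hs
  have h1s : 0 < 1 - s := by linarith [hs.2]
  refine ⟨2 * C / ((1 - s) * c), by positivity, fun E hE x₀ r R hr hrR hR1 hB => ?_⟩
  have hn' : (1 : ℝ) ≤ n := by exact_mod_cast hn
  have hα : 0 ≤ 1 - s / n := by
    rw [sub_nonneg, div_le_one (by linarith)]; linarith [hs.2]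
  have hfin : ∀ ρ, volume (ball x₀ ρ ∩ E) ≠ ⊤ := fun ρ =>
    ne_top_of_le_ne_top measure_ball_lt_top.ne (measure_mono inter_subset_left)
  set g : ℝ → EuclideanSpace ℝ (Fin n) → ENNReal := fun ρ x =>
    if ‖x - x₀‖ < ρ then ENNReal.ofReal (C * (ρ - ‖x - x₀‖) ^ (-s)) else 0 with hg
  have hgm : Measurable (Function.uncurry g) := by
    refine Measurable.ite (measurableSet_lt (by fun_prop) (by fun_prop)) (by fun_prop)
      measurable_const
  have hstep : ∀ ρ ∈ Ioo r R, ENNReal.ofReal (c * (volume (ball x₀ r ∩ E)).toReal ^ (1 - s / n))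
      ≤ 2 * ∫⁻ x in ball x₀ R ∩ E, g ρ x := by
    intro ρ hρ
    set A := ball x₀ ρ ∩ E with hA
    have hAm : MeasurableSet A := measurableSet_ball.inter hE.1
    have hmin := hE.sub hn hs hAm inter_subset_right
      (inter_subset_left.trans ((ball_subset_ball hρ.2.le).trans hB))
    have hAc : Aᶜ = Eᶜ ∪ (E \ A) := by
      ext x; simp only [hA, mem_compl_iff, mem_inter_iff, mem_union, Set.mem_sdiff]; tauto
    calc _ ≤ ENNReal.ofReal (c * (volume A).toReal ^ (1 - s / n)) := by
          gcongr
          · exact hfin _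
          · exact inter_subset_inter_left _ (ball_subset_ball hρ.1.le)
      _ ≤ interactionL n s A Aᶜ := hc A hAm (hfin ρ)
      _ = interactionL n s A Eᶜ + interactionL n s A (E \ A) := by
          rw [hAc, L_union_right n s (hE.1.diff hAm)
            (disjoint_compl_left.mono_right sdiff_subset)]
      _ ≤ 2 * interactionL n s A (E \ A) := by rw [two_mul]; gcongr
      _ ≤ 2 * interactionL n s A (ball x₀ ρ)ᶜ := by
          gcongr
          refine L_mono n s le_rfl ?_
          intro y hy hyb; exact hy.2 ⟨hyb, hy.1⟩
      _ ≤ 2 * ∫⁻ x in A, g ρ x := by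
          gcongr
          rw [interactionL_eq]
          refine setLIntegral_mono' hAm fun x hx => ?_
          have hx1 : ‖x - x₀‖ < ρ := by
            have := hx.1; rwa [mem_ball, dist_eq_norm] at this
          simp only [hg, if_pos hx1]
          exact point_ball_bound hC x₀ x ρ hx1
      _ ≤ _ := by
          gcongr
          exact inter_subset_inter_left _ (ball_subset_ball hρ.2.le)
  have hint : ENNReal.ofReal (c * (volume (ball x₀ r ∩ E)).toReal ^ (1 - s / n) * (R - r)) ≤
      ENNReal.ofReal (2 * (C / (1 - s)) * (volume (ball x₀ R ∩ E)).toReal) := by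
    calc _ = ∫⁻ ρ in Ioo r R,
          ENNReal.ofReal (c * (volume (ball x₀ r ∩ E)).toReal ^ (1 - s / n)) := by
          rw [setLIntegral_const, Real.volume_Ioo, ENNReal.ofReal_mul (by positivity)]
      _ ≤ ∫⁻ ρ in Ioo r R, 2 * ∫⁻ x in ball x₀ R ∩ E, g ρ x :=
          setLIntegral_mono' measurableSet_Ioo hstep
      _ = 2 * ∫⁻ x in ball x₀ R ∩ E, ∫⁻ ρ in Ioo r R, g ρ x := by
          rw [lintegral_const_mul' _ _ (by norm_num), lintegral_lintegral_swap hgm.aemeasurable]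
      _ ≤ 2 * ∫⁻ x in ball x₀ R ∩ E, ENNReal.ofReal (C / (1 - s)) := by
          gcongr 2 * ?_
          refine setLIntegral_mono' (measurableSet_ball.inter hE.1) fun x hx => ?_
          have hx1 : ‖x - x₀‖ < R := by
            have := hx.1; rwa [mem_ball, dist_eq_norm] at this
          refine le_trans ?_ (inner_bound s hs C hC0 ‖x - x₀‖ R (norm_nonneg _) hx1 hR1)
          rw [← lintegral_indicator measurableSet_Ioo, ← lintegral_indicator measurableSet_Ioo]
          refine lintegral_mono fun ρ => ?_
          by_cases h1 : ρ ∈ Ioo r R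
          · by_cases h2 : ‖x - x₀‖ < ρ
            · rw [indicator_of_mem h1, indicator_of_mem (show ρ ∈ Ioo _ _ from ⟨h2, h1.2⟩)]
              simp only [hg, if_pos h2]; exact le_rfl
            · rw [indicator_of_mem h1]; simp only [hg, if_neg h2]; exact zero_le
          · rw [indicator_of_notMem h1]; exact zero_le
      _ = _ := by
          rw [setLIntegral_const, ← ENNReal.ofReal_toReal (hfin R), ← mul_assoc,
            ENNReal.toReal_ofReal ENNReal.toReal_nonneg, ENNReal.ofReal_mul (by positivity),
            ENNReal.ofReal_mul (by norm_num)]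
          simp
  rw [ENNReal.ofReal_le_ofReal_iff (by positivity)] at hint
  rw [div_mul_eq_mul_div, le_div_iff₀ (by positivity)]
  have h6 : 2 * (C / (1 - s)) * (volume (ball x₀ R ∩ E)).toReal * (1 - s)
      = 2 * C * (volume (ball x₀ R ∩ E)).toReal := by field_simp
  rw [← h6]
  calc _ = (c * (volume (ball x₀ r ∩ E)).toReal ^ (1 - s / n) * (R - r)) * (1 - s) := by ring
    _ ≤ _ := by gcongr

/-- De Giorgi iteration. -/
lemma deGiorgi (α M r₀ : ℝ) (hα0 : 0 < α) (hα1 : α < 1) (hM : 0 < M) (hr₀ : 0 < r₀) :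
    ∃ δ : ℝ, 0 < δ ∧ ∀ V : ℝ → ℝ, (∀ r, 0 < r → 0 < V r) → Monotone V →
      (∀ r R, 0 < r → r < R → R ≤ r₀ → V r ^ α * (R - r) ≤ M * V R) → δ ≤ V r₀ := by
  set q : ℝ := (1 / 2 : ℝ) ^ (1 / (1 - α)) with hq
  have h1α : 0 < 1 - α := by linarith
  have hq0 : 0 < q := by positivity
  have hq1 : q < 1 := Real.rpow_lt_one (by norm_num) (by norm_num) (by positivity)
  have hqα : q ^ (1 - α) = 1 / 2 := by
    rw [hq, ← Real.rpow_mul (by norm_num), one_div (1 - α), inv_mul_cancel₀ h1α.ne', Real.rpow_one]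
  set N : ℝ := 4 * M / r₀ with hN
  have hN0 : 0 < N := by positivity
  set δ : ℝ := (q ^ α / N) ^ (1 / (1 - α)) with hδ
  have hδ0 : 0 < δ := by positivity
  have hδα : δ ^ (1 - α) = q ^ α / N := by
    rw [hδ, ← Real.rpow_mul (by positivity), one_div (1 - α), inv_mul_cancel₀ h1α.ne',
      Real.rpow_one]
  refine ⟨δ, hδ0, fun V hV hmono hstep => ?_⟩
  by_contra! hlt
  have key : ∀ k : ℕ, V (r₀ * (1 / 2 + (1 / 2) ^ (k + 1))) ≤ δ * q ^ k := by
    intro k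
    induction k with
    | zero => simp only [zero_add, pow_one, pow_zero, mul_one]; norm_num; exact hlt.le
    | succ k ih =>
      set a : ℝ := (1 / 2 : ℝ) ^ (k + 1) with ha
      have ha0 : 0 < a := by positivity
      have ha1 : a ≤ 1 / 2 := by
        rw [ha, pow_succ]; have : (1 / 2 : ℝ) ^ k ≤ 1 := pow_le_one₀ (by norm_num) (by norm_num)
        linarith
      have ha2 : (1 / 2 : ℝ) ^ (k + 1 + 1) = a / 2 := by rw [pow_succ]; ring
      rw [ha2]
      have h := hstep (r₀ * (1 / 2 + a / 2)) (r₀ * (1 / 2 + a)) (by positivity)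
        (by nlinarith) (by nlinarith)
      set v' := V (r₀ * (1 / 2 + a / 2)) with hv'
      have hv'0 : 0 < v' := hV _ (by positivity)
      have h2 : v' ^ α * (r₀ * a / 2) ≤ M * (δ * q ^ k) := by
        calc _ = v' ^ α * (r₀ * (1 / 2 + a) - r₀ * (1 / 2 + a / 2)) := by ring
          _ ≤ _ := h
          _ ≤ _ := by gcongr
      have h3 : v' ^ α ≤ N * δ * q ^ k * 2 ^ k := by
        have e : a = (2 ^ k)⁻¹ / 2 := by rw [ha, pow_succ, one_div, inv_pow]; ring
        rw [e] at h2
        rw [hN]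
        have h2k : (0 : ℝ) < 2 ^ k := by positivity
        have : v' ^ α ≤ (M * (δ * q ^ k)) / (r₀ * ((2 ^ k)⁻¹ / 2) / 2) := by
          rw [le_div_iff₀ (by positivity)]; exact h2
        refine this.trans (le_of_eq ?_)
        field_simp; norm_num
      have h4 : N * δ * q ^ k * 2 ^ k = (δ * q ^ (k + 1)) ^ α := by
        have e1 : δ = δ ^ α * (q ^ α / N) := by
          rw [← hδα, ← Real.rpow_add hδ0]; simp
        have e2 : q ^ k * 2 ^ k = (q ^ k) ^ α := by
          have : q = q ^ α * (1 / 2) := by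
            rw [← hqα, ← Real.rpow_add hq0]; simp
          rw [← mul_pow, ← Real.rpow_natCast (q) k, ← Real.rpow_mul hq0.le, mul_comm (k : ℝ) α,
            Real.rpow_mul hq0.le, Real.rpow_natCast]
          congr 1; linarith
        rw [Real.mul_rpow hδ0.le (by positivity), pow_succ, Real.mul_rpow (by positivity) hq0.le,
          ← e2]
        calc _ = N * (δ ^ α * (q ^ α / N)) * q ^ k * 2 ^ k := by rw [← e1]
          _ = _ := by field_simp
      rw [h4] at h3
      exact (Real.rpow_le_rpow_iff hv'0.le (by positivity) hα0).1 h3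
  have hle : ∀ k : ℕ, V (r₀ / 2) ≤ δ * q ^ k := fun k =>
    (hmono (by
      have : (0 : ℝ) < (1 / 2) ^ (k + 1) := by positivity
      nlinarith)).trans (key k)
  have hlim : Tendsto (fun k : ℕ => δ * q ^ k) atTop (nhds (δ * 0)) :=
    (tendsto_pow_atTop_nhds_zero_of_lt_one hq0.le hq1).const_mul δ
  have := ge_of_tendsto' hlim hle
  have := hV (r₀ / 2) (by positivity)
  linarith

/-- Uniform density estimate. -/
lemma density (n : ℕ) (hn : 1 ≤ n) (s : ℝ) (hs : s ∈ Set.Ioo (0:ℝ) 1) (r₀ : ℝ) (hr₀ : 0 < r₀)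
    (hr1 : r₀ ≤ 1) :
    ∃ δ : ℝ, 0 < δ ∧ ∀ E : Set (EuclideanSpace ℝ (Fin n)), IsMinimizerB1 n s E →
      ∀ x₀ : EuclideanSpace ℝ (Fin n), ball x₀ r₀ ⊆ ball 0 1 →
        (∀ ρ, 0 < ρ → 0 < volume (ball x₀ ρ ∩ E)) → δ ≤ (volume (ball x₀ r₀ ∩ E)).toReal := by
  obtain ⟨M, hM0, hM⟩ := main_ineq n hn s hs
  have hn' : (1 : ℝ) ≤ n := by exact_mod_cast hn
  have h1 : 0 < 1 - s / n := by
    rw [sub_pos, div_lt_one (by linarith)]; linarith [hs.2]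
  have h2 : 1 - s / n < 1 := by
    have : 0 < s / n := div_pos hs.1 (by linarith)
    linarith
  obtain ⟨δ, hδ, h⟩ := deGiorgi (1 - s / n) M r₀ h1 h2 hM0 hr₀
  refine ⟨δ, hδ, fun E hE x₀ hB hpos => ?_⟩
  have hfin : ∀ ρ, volume (ball x₀ ρ ∩ E) ≠ ⊤ := fun ρ =>
    ne_top_of_le_ne_top measure_ball_lt_top.ne (measure_mono inter_subset_left)
  refine h (fun r => (volume (ball x₀ r ∩ E)).toReal)
    (fun r hr => ENNReal.toReal_pos (hpos r hr).ne' (hfin r)) ?_ ?_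
  · intro a b hab
    exact ENNReal.toReal_mono (hfin b) (measure_mono (inter_subset_inter_left _
      (ball_subset_ball hab)))
  · intro r R hr hrR hR
    exact hM E hE x₀ r R hr hrR (hR.trans hr1) ((ball_subset_ball hR).trans hB)

/-- A ball in which both `E` and its complement have positive measure meets the boundary. -/
lemma exists_boundary (n : ℕ) (E : Set (EuclideanSpace ℝ (Fin n)))
    (x : EuclideanSpace ℝ (Fin n)) (r : ℝ) (h1 : volume (ball x r ∩ E) ≠ 0)
    (h2 : volume (ball x r \ E) ≠ 0) : ∃ y ∈ mtBoundary n E, y ∈ ball x r := by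
  by_contra! hno
  set U : Set (EuclideanSpace ℝ (Fin n)) := {y | ∃ ρ > 0, volume (ball y ρ ∩ E) = 0} with hU
  set W : Set (EuclideanSpace ℝ (Fin n)) := {y | ∃ ρ > 0, volume (ball y ρ \ E) = 0} with hW
  have hsub : ∀ (y z : EuclideanSpace ℝ (Fin n)) (ρ : ℝ), z ∈ ball y ρ →
      ball z (ρ - dist z y) ⊆ ball y ρ := fun y z ρ _ => ball_subset_ball' (by linarith)
  have hUo : IsOpen U := by
    rw [Metric.isOpen_iff]
    rintro y ⟨ρ, hρ, h⟩
    refine ⟨ρ, hρ, fun z hz => ⟨ρ - dist z y, by rw [mem_ball] at hz; linarith, ?_⟩⟩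
    exact measure_mono_null (inter_subset_inter_left _ (hsub y z ρ hz)) h
  have hWo : IsOpen W := by
    rw [Metric.isOpen_iff]
    rintro y ⟨ρ, hρ, h⟩
    refine ⟨ρ, hρ, fun z hz => ⟨ρ - dist z y, by rw [mem_ball] at hz; linarith, ?_⟩⟩
    exact measure_mono_null (sdiff_subset_sdiff_left (hsub y z ρ hz)) h
  have hcov : ball x r ⊆ U ∪ W := by
    intro y hy
    by_contra hn
    refine hno y (fun ρ hρ => ⟨?_, ?_⟩) hy
    · rw [pos_iff_ne_zero]; intro h; exact hn (Or.inl ⟨ρ, hρ, h⟩)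
    · rw [pos_iff_ne_zero]; intro h; exact hn (Or.inr ⟨ρ, hρ, h⟩)
  have hUn : (ball x r ∩ U).Nonempty := by
    by_contra hem
    apply h2
    refine measure_null_of_locally_null _ fun y hy => ?_
    rcases hcov hy.1 with h | ⟨ρ, hρ, h⟩
    · exact absurd ⟨y, hy.1, h⟩ hem
    · refine ⟨ball y ρ \ E, ?_, h⟩
      rw [mem_nhdsWithin]
      exact ⟨ball y ρ, isOpen_ball, mem_ball_self hρ, fun z hz => ⟨hz.1, hz.2.2⟩⟩
  have hWn : (ball x r ∩ W).Nonempty := by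
    by_contra hem
    apply h1
    refine measure_null_of_locally_null _ fun y hy => ?_
    rcases hcov hy.1 with ⟨ρ, hρ, h⟩ | h
    · refine ⟨ball y ρ ∩ E, ?_, h⟩
      rw [mem_nhdsWithin]
      exact ⟨ball y ρ, isOpen_ball, mem_ball_self hρ, fun z hz => ⟨hz.1, hz.2.2⟩⟩
    · exact absurd ⟨y, hy.1, h⟩ hem
  obtain ⟨y, -, ⟨ρ, hρ, hy1⟩, ⟨σ, hσ, hy2⟩⟩ := isPreconnected_ball U W hUo hWo hcov hUn hWn
  have hpos := measure_ball_pos (volume : Measure (EuclideanSpace ℝ (Fin n))) y (lt_min hρ hσ)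
  refine hpos.ne' (measure_mono_null (t := (ball y ρ ∩ E) ∪ (ball y σ \ E)) ?_
    (measure_union_null hy1 hy2))
  intro z hz
  by_cases hzE : z ∈ E
  · exact Or.inl ⟨ball_subset_ball (min_le_left _ _) hz, hzE⟩
  · exact Or.inr ⟨ball_subset_ball (min_le_right _ _) hz, hzE⟩

lemma meas_le_integral (n : ℕ) {A B S K : Set (EuclideanSpace ℝ (Fin n))}
    (hA : MeasurableSet A) (hB : MeasurableSet B) (hS : MeasurableSet S) (hK : IsCompact K)
    (hSK : S ⊆ K) (hSAB : S ⊆ (A \ B) ∪ (B \ A)) :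
    (volume S).toReal ≤ ∫ x in K,
      |Set.indicator A (fun _ => (1:ℝ)) x - Set.indicator B (fun _ => (1:ℝ)) x| := by
  have hKt : volume K ≠ ⊤ := hK.measure_lt_top.ne
  have hiA : IntegrableOn (A.indicator (fun _ => (1:ℝ))) K :=
    (integrableOn_const hKt).indicator hA
  have hiB : IntegrableOn (B.indicator (fun _ => (1:ℝ))) K :=
    (integrableOn_const hKt).indicator hB
  have hiS : IntegrableOn (S.indicator (fun _ => (1:ℝ))) K :=
    (integrableOn_const hKt).indicator hS
  calc (volume S).toReal = ∫ x in K, S.indicator (fun _ => (1:ℝ)) x := by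
        rw [setIntegral_indicator hS, inter_eq_right.2 hSK]; simp [Measure.real]
    _ ≤ _ := by
      refine integral_mono hiS (hiA.sub hiB).abs fun x => ?_
      by_cases hx : x ∈ S
      · rw [indicator_of_mem hx]
        rcases hSAB hx with h | h
        · simp [indicator_of_mem h.1, indicator_of_notMem h.2]
        · simp [indicator_of_mem h.1, indicator_of_notMem h.2]
      · rw [indicator_of_notMem hx]; exact abs_nonneg _

/-- Hausdorff convergence of boundaries: if minimizers `E_k → E` in `L¹_loc`, then for every
`ε > 0`, eventually every point of `∂E_k ∩ B_{1/2}` is within `ε` of `∂E`. -/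
theorem boundary_convergence (n : ℕ) (hn : 1 ≤ n) (s : ℝ) (hs : s ∈ Set.Ioo (0:ℝ) 1)
    (Ek : ℕ → Set (EuclideanSpace ℝ (Fin n))) (E : Set (EuclideanSpace ℝ (Fin n)))
    (hE : MeasurableSet E)
    (hmin : ∀ k, IsMinimizerB1 n s (Ek k))
    (hconv : L1locIndicatorTendsto n Ek E) :
    ∀ ε : ℝ, 0 < ε → ∃ K : ℕ, ∀ k ≥ K,
      ∀ x ∈ mtBoundary n (Ek k) ∩ ball (0 : EuclideanSpace ℝ (Fin n)) (1/2),
        ∃ y ∈ mtBoundary n E, dist x y ≤ ε := by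
  intro ε hε
  set r₀ : ℝ := min ε (1 / 2) with hr₀
  have hr0 : 0 < r₀ := lt_min hε (by norm_num)
  have hr2 : r₀ ≤ 1 / 2 := min_le_right _ _
  obtain ⟨δ, hδ, hden⟩ := density n hn s hs r₀ hr0 (by linarith)
  have hKc : IsCompact (closedBall (0 : EuclideanSpace ℝ (Fin n)) 1) := isCompact_closedBall _ _
  obtain ⟨K, hK⟩ := eventually_atTop.1 ((hconv _ hKc).eventually (gt_mem_nhds hδ))
  refine ⟨K, fun k hk x hx => ?_⟩
  have hk' := hK k hk
  have hB : ball x r₀ ⊆ ball 0 1 := ball_subset_ball' (by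
    have := hx.2; rw [mem_ball] at this; linarith)
  have hEk := (hmin k).1
  have d1 := hden (Ek k) (hmin k) x hB (fun ρ hρ => (hx.1 ρ hρ).1)
  have d2 := hden (Ek k)ᶜ (hmin k).compl x hB (fun ρ hρ => by
    rw [← sdiff_eq]; exact (hx.1 ρ hρ).2)
  have hfin : ∀ S : Set (EuclideanSpace ℝ (Fin n)), volume (ball x r₀ ∩ S) ≠ ⊤ := fun S =>
    ne_top_of_le_ne_top measure_ball_lt_top.ne (measure_mono inter_subset_left)
  obtain ⟨y, hy, hyb⟩ := exists_boundary n E x r₀ (by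
    intro h0
    have hS := meas_le_integral n (S := ball x r₀ ∩ (Ek k \ E)) hEk hE
      (measurableSet_ball.inter (hEk.diff hE)) hKc
      (inter_subset_left.trans (hB.trans ball_subset_closedBall))
      (inter_subset_right.trans subset_union_left)
    have hle : volume (ball x r₀ ∩ Ek k) ≤ volume (ball x r₀ ∩ (Ek k \ E)) := by
      refine (measure_mono (t := (ball x r₀ ∩ (Ek k \ E)) ∪ (ball x r₀ ∩ E)) ?_).trans
        ((measure_union_le _ _).trans (by rw [h0, add_zero]))
      intro z hz
      by_cases hzE : z ∈ E
      · exact Or.inr ⟨hz.1, hzE⟩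
      · exact Or.inl ⟨hz.1, hz.2, hzE⟩
    have := ENNReal.toReal_mono (hfin _) hle
    linarith) (by
    intro h0
    have hS := meas_le_integral n (S := ball x r₀ ∩ (E \ Ek k)) hEk hE
      (measurableSet_ball.inter (hE.diff hEk)) hKc
      (inter_subset_left.trans (hB.trans ball_subset_closedBall))
      (inter_subset_right.trans subset_union_right)
    have hle : volume (ball x r₀ ∩ (Ek k)ᶜ) ≤ volume (ball x r₀ ∩ (E \ Ek k)) := by
      refine (measure_mono (t := (ball x r₀ ∩ (E \ Ek k)) ∪ (ball x r₀ \ E)) ?_).trans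
        ((measure_union_le _ _).trans (by rw [h0, add_zero]))
      intro z hz
      by_cases hzE : z ∈ E
      · exact Or.inl ⟨hz.1, hzE, hz.2⟩
      · exact Or.inr ⟨hz.1, hzE⟩
    have := ENNReal.toReal_mono (hfin _) hle
    linarith)
  refine ⟨y, hy, ?_⟩
  rw [dist_comm]
  exact (mem_ball.1 hyb).le.trans (min_le_left _ _)
end
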